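/- The weight-one level-three Eisenstein series f = E_{1,3} satisfies the third-order nonlinear ODE: for every τ ∈ ℍ, f²(f''')² − 6f'(3ff'' − 4(f')²)f''' + 18f(f'')³ − (f⁶ + 27(f')²)(f'')² + 4f⁵(f')²f'' − 4f⁴(f')⁴ = 0. -/

import Mathlib

open Complex

noncomputable section

/-- The normalized derivative `F' = (2πi)⁻¹ dF/dτ`. -/
def nderiv (F : ℂ → ℂ) : ℂ → ℂ := fun τ => (2 * Real.pi * Complex.I)⁻¹ * deriv F τ

/-- `q = e^{2πiτ}`. -/
def qq (τ : ℂ) : ℂ := Complex.exp (2 * Real.pi * Complex.I * τ)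

/-- The weight-one level-three Eisenstein series
`E_{1,3}(τ) = Σ_{(α,β)∈ℤ²} q^{α²−αβ+β²}`. -/
def E13 : ℂ → ℂ := fun τ => ∑' p : ℤ × ℤ, qq τ ^ (p.1 ^ 2 - p.1 * p.2 + p.2 ^ 2)

/-!
Put `f = E13`, `g = f f'' - 2 f'²` and `h = f g' - 6 f' g`; the latter two are Rankin–Cohen
brackets, of weights `6` and `9`. Multiplied by `f²`, the left-hand side of the equation becomes
`h² + 18 g³ - f⁶ g²`, which is homogeneous of weight `18`.

Separating even and odd summation indices writes `f` in terms of Jacobi theta null values, whose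
inversion formulas give `f (-1 / (3τ)) = -i √3 τ f τ`. Hence `h² + 18 g³ - f⁶ g²` transforms with
weight `18` under `τ ↦ -1 / (3τ)`. It has period `1`, and its `q`-expansion vanishes to order `5`.
By the maximum principle this is too high an order for a nonzero form of weight `18`. Since `f` is
not identically zero, the factor `f²` can be cancelled.
-/

open Function.Periodic Polynomial
open UpperHalfPlane (upperHalfPlaneSet isOpen_upperHalfPlaneSet)
open scoped Topology

local notation "ℍₒ" => upperHalfPlaneSet

section JacobiTheta

lemma hasSum_int_even_add_odd {f : ℤ → ℂ} {s t : ℂ} (he : HasSum (fun n ↦ f (2 * n)) s)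
    (ho : HasSum (fun n ↦ f (2 * n + 1)) t) : HasSum f (s + t) := by
  have h2 : Function.Injective fun n : ℤ ↦ 2 * n := mul_right_injective₀ two_ne_zero
  have ho' := ((add_left_injective 1).comp h2).hasSum_range_iff.2 ho
  refine (h2.hasSum_range_iff.2 he).add_isCompl ?_ ho'
  simpa [Function.comp_def] using Int.isCompl_even_odd

lemma jacobiTheta₂_eq_even_add_odd (z : ℂ) {τ : ℂ} (hτ : 0 < τ.im) :
    jacobiTheta₂ z τ = jacobiTheta₂ (2 * z) (4 * τ) +
      cexp (2 * Real.pi * I * z + Real.pi * I * τ) * jacobiTheta₂ (2 * z + 2 * τ) (4 * τ) := by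
  have h4τ : 0 < (4 * τ).im := by simpa using hτ
  refine (hasSum_jacobiTheta₂_term z hτ).unique (hasSum_int_even_add_odd ?_ ?_)
  · refine (hasSum_jacobiTheta₂_term (2 * z) h4τ).congr_fun fun n ↦ ?_
    simp only [jacobiTheta₂_term]
    push_cast
    ring_nf
  · refine ((hasSum_jacobiTheta₂_term (2 * z + 2 * τ) h4τ).mul_left _).congr_fun fun n ↦ ?_
    simp only [jacobiTheta₂_term, ← Complex.exp_add]
    push_cast
    ring_nf

/-- The Jacobi theta null value `θ₂(τ) = Σ_{n ∈ ℤ} e^{πi(n + 1/2)²τ}`; `θ₃` is `jacobiTheta`. -/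
def thetaTwo (τ : ℂ) : ℂ := cexp (Real.pi * I * τ / 4) * jacobiTheta₂ (τ / 2) τ

/-- The Jacobi theta null value `θ₄(τ) = Σ_{n ∈ ℤ} (-1)ⁿ e^{πin²τ}`. -/
def thetaFour (τ : ℂ) : ℂ := jacobiTheta₂ (1 / 2) τ

lemma jacobiTheta_eq_add_thetaTwo {τ : ℂ} (hτ : 0 < τ.im) :
    jacobiTheta τ = jacobiTheta (4 * τ) + thetaTwo (4 * τ) := by
  simp only [jacobiTheta_eq_jacobiTheta₂, thetaTwo]
  rw [jacobiTheta₂_eq_even_add_odd 0 hτ]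
  ring_nf

lemma thetaFour_eq_sub_thetaTwo {τ : ℂ} (hτ : 0 < τ.im) :
    thetaFour τ = jacobiTheta (4 * τ) - thetaTwo (4 * τ) := by
  have hexp : cexp (2 * Real.pi * I * (1 / 2) + Real.pi * I * τ) = -cexp (Real.pi * I * τ) := by
    rw [Complex.exp_add, show 2 * Real.pi * I * (1 / 2) = Real.pi * I by ring, Complex.exp_pi_mul_I,
      neg_one_mul]
  simp only [jacobiTheta_eq_jacobiTheta₂, thetaTwo, thetaFour]
  rw [jacobiTheta₂_eq_even_add_odd _ hτ, hexp, show (2 : ℂ) * (1 / 2) = 0 + 1 by norm_num,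
    jacobiTheta₂_add_left, add_right_comm, jacobiTheta₂_add_left]
  ring_nf

lemma jacobiTheta_functional_equation (τ : ℂ) :
    jacobiTheta τ = 1 / (-I * τ) ^ (1 / 2 : ℂ) * jacobiTheta (-1 / τ) := by
  simpa [jacobiTheta_eq_jacobiTheta₂] using jacobiTheta₂_functional_equation 0 τ

lemma thetaTwo_functional_equation {τ : ℂ} (hτ : τ ≠ 0) :
    thetaTwo τ = 1 / (-I * τ) ^ (1 / 2 : ℂ) * thetaFour (-1 / τ) := by
  have hexp : cexp (Real.pi * I * τ / 4) * cexp (-Real.pi * I * (τ / 2) ^ 2 / τ) = 1 := by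
    rw [← Complex.exp_add, Complex.exp_eq_one_iff]
    exact ⟨0, by field_simp; ring⟩
  rw [thetaTwo, thetaFour, jacobiTheta₂_functional_equation, div_right_comm, div_self hτ]
  linear_combination 1 / (-I * τ) ^ (1 / 2 : ℂ) * jacobiTheta₂ (1 / 2) (-1 / τ) * hexp

lemma ofReal_mul_cpow {r : ℝ} (hr : 0 < r) {z : ℂ} (hz : z ≠ 0) (s : ℂ) :
    (r * z) ^ s = (r : ℂ) ^ s * z ^ s := by
  have hr' : (r : ℂ) ≠ 0 := mod_cast hr.ne'
  rw [cpow_def_of_ne_zero (mul_ne_zero hr' hz), cpow_def_of_ne_zero hr', cpow_def_of_ne_zero hz,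
    log_ofReal_mul hr hz, ofReal_log hr.le, add_mul, Complex.exp_add]

end JacobiTheta

section ThetaSeries

lemma hasSum_mul_prod {ι κ : Type*} {u : ι → ℂ} {v : κ → ℂ} {s t : ℂ} (hu : HasSum u s)
    (hv : HasSum v t) : HasSum (fun p : ι × κ ↦ u p.1 * v p.2) (s * t) :=
  hu.mul hv (summable_mul_of_summable_norm hu.summable.norm hv.summable.norm)

lemma qq_zpow (τ : ℂ) (n : ℤ) : qq τ ^ n = cexp (2 * Real.pi * I * τ * n) := by
  rw [qq, ← Complex.exp_int_mul]
  ring_nf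

lemma jacobiTheta₂_term_mul_add_term_mul (n m : ℤ) (τ : ℂ) :
    jacobiTheta₂_term n 0 (τ / 2) * jacobiTheta₂_term m 0 (3 * τ / 2) +
      jacobiTheta₂_term n (1 / 2) (τ / 2) * jacobiTheta₂_term m (1 / 2) (3 * τ / 2) =
    (1 + cexp (Real.pi * I * (n + m : ℤ))) * cexp (Real.pi * I * (n ^ 2 + 3 * m ^ 2) * τ / 2) := by
  simp only [jacobiTheta₂_term, ← Complex.exp_add, add_mul, one_mul]
  congr 2 <;> push_cast <;> ring

-- With `x = 2α - β` and `y = β` one has `α² - αβ + β² = (x² + 3y²) / 4`; the pairs `(x, y)` that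
-- occur are those with `x + y` even, and the weight `(1 + (-1)^(x + y)) / 2` picks these out.
lemma hasSum_E13_theta {τ : ℂ} (hτ : 0 < τ.im) :
    HasSum (fun p : ℤ × ℤ ↦ qq τ ^ (p.1 ^ 2 - p.1 * p.2 + p.2 ^ 2))
      ((jacobiTheta (τ / 2) * jacobiTheta (3 * τ / 2) +
        thetaFour (τ / 2) * thetaFour (3 * τ / 2)) / 2) := by
  have h1 : 0 < (τ / 2).im := by simpa using hτ
  have h3 : 0 < (3 * τ / 2).im := by simpa using hτ
  have hfull := ((hasSum_mul_prod (hasSum_jacobiTheta₂_term 0 h1)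
    (hasSum_jacobiTheta₂_term 0 h3)).add (hasSum_mul_prod
      (hasSum_jacobiTheta₂_term (1 / 2) h1) (hasSum_jacobiTheta₂_term (1 / 2) h3))).div_const 2
  simp only [jacobiTheta₂_term_mul_add_term_mul] at hfull
  have hinj : Function.Injective fun p : ℤ × ℤ ↦ (2 * p.1 - p.2, p.2) := by
    rintro ⟨a, b⟩ ⟨c, d⟩ h
    simp only [Prod.mk.injEq] at h ⊢
    omega
  simp only [jacobiTheta_eq_jacobiTheta₂, thetaFour]
  rw [← hinj.hasSum_iff] at hfull
  · refine hfull.congr_fun fun ⟨a, b⟩ ↦ ?_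
    have hexp : cexp (Real.pi * I * (2 * a - b + b : ℤ)) = 1 :=
      Complex.exp_eq_one_iff.2 ⟨a, by push_cast; ring⟩
    simp only [Function.comp_apply, hexp, qq_zpow]
    push_cast
    ring_nf
  · rintro ⟨x, y⟩ hxy
    have hodd : Odd (x + y) := by
      by_contra! h
      obtain ⟨k, hk⟩ := Int.not_odd_iff_even.1 h
      exact hxy ⟨(k, y), Prod.ext (by dsimp only; omega) rfl⟩
    obtain ⟨k, hk⟩ := hodd
    have hexp : cexp (Real.pi * I * (x + y : ℤ)) = -1 := by
      rw [← Complex.exp_pi_mul_I, Complex.exp_eq_exp_iff_exists_int]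
      exact ⟨k, by rw [hk]; push_cast; ring⟩
    simp only [hexp, add_neg_cancel, zero_mul, zero_div]

lemma E13_eq_thetaFour {τ : ℂ} (hτ : 0 < τ.im) :
    E13 τ = (jacobiTheta (τ / 2) * jacobiTheta (3 * τ / 2) +
      thetaFour (τ / 2) * thetaFour (3 * τ / 2)) / 2 :=
  (hasSum_E13_theta hτ).tsum_eq

lemma E13_eq_thetaTwo {τ : ℂ} (hτ : 0 < τ.im) :
    E13 τ = jacobiTheta (2 * τ) * jacobiTheta (6 * τ) + thetaTwo (2 * τ) * thetaTwo (6 * τ) := by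
  have h1 : 0 < (τ / 2).im := by simpa using hτ
  have h3 : 0 < (3 * τ / 2).im := by simpa using hτ
  rw [E13_eq_thetaFour hτ, jacobiTheta_eq_add_thetaTwo h1, jacobiTheta_eq_add_thetaTwo h3,
    thetaFour_eq_sub_thetaTwo h1, thetaFour_eq_sub_thetaTwo h3,
    show 4 * (τ / 2) = 2 * τ by ring, show 4 * (3 * τ / 2) = 6 * τ by ring]
  ring

end ThetaSeries

section Fricke

/-- The Fricke involution `τ ↦ -1 / (N τ)` of level `N`. -/
def fricke (N : ℝ) (τ : ℂ) : ℂ := -1 / (N * τ)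

lemma fricke_im (N : ℝ) (τ : ℂ) : (fricke N τ).im = τ.im / (N * normSq τ) := by
  rw [fricke, neg_div, neg_im, one_div, inv_im, normSq_mul, normSq_ofReal, im_ofReal_mul]
  rcases eq_or_ne N 0 with rfl | hN
  · simp
  · field_simp

lemma ne_zero_of_im_pos {τ : ℂ} (hτ : 0 < τ.im) : τ ≠ 0 := by
  rintro rfl
  simp at hτ

lemma fricke_im_pos {N : ℝ} (hN : 0 < N) {τ : ℂ} (hτ : 0 < τ.im) : 0 < (fricke N τ).im := by
  have := normSq_pos.2 (ne_zero_of_im_pos hτ)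
  rw [fricke_im]
  positivity

lemma cpow_half_mul_ofReal_mul_cpow_half {r : ℝ} (hr : 0 < r) {w : ℂ} (hw : w ≠ 0) :
    w ^ (1 / 2 : ℂ) * (r * w) ^ (1 / 2 : ℂ) = Real.sqrt r * w := by
  have hsqrt : (r : ℂ) ^ (1 / 2 : ℂ) = Real.sqrt r := by
    rw [Real.sqrt_eq_rpow, ofReal_cpow hr.le]
    norm_num
  have hsq : w ^ (1 / 2 : ℂ) * w ^ (1 / 2 : ℂ) = w := by
    rw [← cpow_add _ _ hw, add_halves, cpow_one]
  rw [ofReal_mul_cpow hr hw, hsqrt]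
  linear_combination Real.sqrt r * hsq

lemma E13_fricke {τ : ℂ} (hτ : 0 < τ.im) :
    E13 (fricke 3 τ) = -I * Real.sqrt 3 * τ * E13 τ := by
  have hτ0 := ne_zero_of_im_pos hτ
  have hw : -I * (2 * τ) ≠ 0 := by simp [hτ0]
  have hroot := cpow_half_mul_ofReal_mul_cpow_half three_pos hw
  rw [ofReal_ofNat] at hroot
  have h1 : -1 / (2 * τ) = 3 * fricke 3 τ / 2 := by
    rw [fricke]; push_cast; field_simp
  have h3 : -1 / (6 * τ) = fricke 3 τ / 2 := by
    rw [fricke]; push_cast; field_simp; norm_num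
  have hmul : (-I * (2 * τ)) ^ (1 / 2 : ℂ) * (3 * (-I * (2 * τ))) ^ (1 / 2 : ℂ) * E13 τ =
      2 * E13 (fricke 3 τ) := by
    have hne := mul_ne_zero_iff.1 (hroot.trans_ne (by simp [hτ0]))
    rw [E13_eq_thetaFour (fricke_im_pos (by norm_num) hτ), E13_eq_thetaTwo hτ,
      jacobiTheta_functional_equation (2 * τ), jacobiTheta_functional_equation (6 * τ),
      thetaTwo_functional_equation (by simp [hτ0]), thetaTwo_functional_equation (by simp [hτ0]),
      h1, h3, show -I * (6 * τ) = 3 * (-I * (2 * τ)) by ring]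
    generalize (-I * (2 * τ)) ^ (1 / 2 : ℂ) = s, (3 * (-I * (2 * τ))) ^ (1 / 2 : ℂ) = t at hne ⊢
    field_simp [hne.1, hne.2]
  rw [hroot] at hmul
  linear_combination -hmul / 2

end Fricke

section Vanishing

lemma qq_eq_qParam : qq = qParam 1 := by
  ext τ
  simp [qq, qParam]

lemma norm_qq (τ : ℂ) : ‖qq τ‖ = Real.exp (-(2 * Real.pi * τ.im)) := by
  simp [qq_eq_qParam, norm_qParam]

lemma norm_qq_lt_one_iff {τ : ℂ} : ‖qq τ‖ < 1 ↔ 0 < τ.im := by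
  simp [norm_qq, Real.pi_pos]

lemma qq_add_intCast (τ : ℂ) (n : ℤ) : qq (τ + n) = qq τ := by
  rw [qq, qq, Complex.exp_eq_exp_iff_exists_int]
  exact ⟨n, by ring⟩

lemma exists_qq_eq {w : ℂ} (hw : w ≠ 0) : ∃ τ, qq τ = w :=
  ⟨_, qq_eq_qParam ▸ qParam_right_inv one_ne_zero hw⟩

lemma exists_abs_re_add_intCast_le (τ : ℂ) : ∃ n : ℤ, |(τ + n).re| ≤ 1 / 2 :=
  ⟨-round τ.re, by simpa [sub_eq_add_neg] using abs_sub_round τ.re⟩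

lemma div_mul_im_le_fricke_im {N y : ℝ} (hN : 0 < N) {τ : ℂ} (hτ : 0 < τ.im) (hy : τ.im ≤ y)
    (hre : |τ.re| ≤ 1 / 2) : 1 / (N * (y ^ 2 + 1 / 4)) * τ.im ≤ (fricke N τ).im := by
  have hnorm : normSq τ ≤ y ^ 2 + 1 / 4 := by
    rw [normSq_apply]
    nlinarith [abs_le.1 hre]
  have := normSq_pos.2 (ne_zero_of_im_pos hτ)
  rw [fricke_im, div_mul_eq_mul_div, one_mul]
  gcongr

lemma fricke_induction {N y : ℝ} (hN : 0 < N) (hy : N * (y ^ 2 + 1 / 4) < 1) {P : ℂ → Prop}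
    (large : ∀ τ, y < τ.im → P τ) (translate : ∀ τ, 0 < τ.im → ∀ n : ℤ, P (τ + n) → P τ)
    (involute : ∀ τ, 0 < τ.im → P (fricke N τ) → P τ) {τ : ℂ} (hτ : 0 < τ.im) : P τ := by
  set c := 1 / (N * (y ^ 2 + 1 / 4))
  have hc : 1 < c := (one_lt_div (by positivity)).2 hy
  have iterate (n : ℕ) : ∀ τ : ℂ, 0 < τ.im → y < c ^ n * τ.im → P τ := by
    induction n with
    | zero => exact fun τ _ h ↦ large τ (by simpa using h)
    | succ n ih =>
      intro τ hτ h
      obtain hlarge | hsmall := lt_or_ge y τ.im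
      · exact large τ hlarge
      obtain ⟨k, hk⟩ := exists_abs_re_add_intCast_le τ
      have him : (τ + k).im = τ.im := by simp
      have hσ : 0 < (τ + k).im := by rwa [him]
      refine translate τ hτ k (involute _ hσ (ih _ (fricke_im_pos hN hσ) (h.trans_le ?_)))
      rw [pow_succ, mul_assoc, ← him]
      gcongr
      exact div_mul_im_le_fricke_im hN hσ (him.trans_le hsmall) hk
  obtain ⟨n, hn⟩ := pow_unbounded_of_one_lt (y / τ.im) hc
  exact iterate n τ hτ ((div_lt_iff₀ hτ).1 hn)

lemma rpow_mul_exp_neg_lt {a c x y : ℝ} (ha : 0 ≤ a) (hx : 0 < x) (hac : a < c * x) (hxy : x < y) :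
    y ^ a * Real.exp (-(c * y)) < x ^ a * Real.exp (-(c * x)) := by
  have hratio : y / x ≤ Real.exp ((y - x) / x) := by
    have := Real.add_one_le_exp ((y - x) / x)
    rwa [show (y - x) / x + 1 = y / x by field_simp; ring] at this
  have hexp : a * ((y - x) / x) < c * (y - x) := by
    rw [← mul_div_assoc, div_lt_iff₀ hx]
    nlinarith
  have hpos : 0 ≤ y / x := div_nonneg (hx.trans hxy).le hx.le
  calc y ^ a * Real.exp (-(c * y))
      = x ^ a * (y / x) ^ a * Real.exp (-(c * y)) := by
        rw [← Real.mul_rpow hx.le hpos, mul_div_cancel₀ y hx.ne']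
    _ ≤ x ^ a * Real.exp ((y - x) / x) ^ a * Real.exp (-(c * y)) := by gcongr
    _ = x ^ a * Real.exp (a * ((y - x) / x) - c * y) := by
        rw [← Real.exp_mul, mul_assoc, ← Real.exp_add]
        ring_nf
    _ < x ^ a * Real.exp (-(c * x)) := by
        gcongr
        linarith

lemma exists_norm_eq_forall_norm_le {G : ℂ → ℂ} (hG : DifferentiableOn ℂ G (Metric.ball 0 1))
    {r : ℝ} (hr0 : 0 < r) (hr1 : r < 1) : ∃ w, ‖w‖ = r ∧ ∀ z, ‖z‖ ≤ r → ‖G z‖ ≤ ‖G w‖ := by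
  have hd : DiffContOnCl ℂ G (Metric.ball 0 r) := by
    refine DifferentiableOn.diffContOnCl ?_
    rw [closure_ball _ hr0.ne']
    exact hG.mono (Metric.closedBall_subset_ball hr1)
  obtain ⟨w, hw, hmax⟩ := Complex.exists_mem_frontier_isMaxOn_norm Metric.isBounded_ball
    (Metric.nonempty_ball.2 hr0) hd
  rw [frontier_ball _ hr0.ne', mem_sphere_zero_iff_norm] at hw
  rw [closure_ball _ hr0.ne'] at hmax
  exact ⟨w, hw, fun z hz ↦ hmax (mem_closedBall_zero_iff.2 hz)⟩

lemma norm_mul_im_rpow_fricke {N a : ℝ} (hN : 0 < N) {F : ℂ → ℂ} {τ : ℂ} (hτ : 0 < τ.im)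
    (hF : ‖F (fricke N τ)‖ = (N * normSq τ) ^ a * ‖F τ‖) :
    ‖F (fricke N τ)‖ * (fricke N τ).im ^ a = ‖F τ‖ * τ.im ^ a := by
  have hpos : 0 < N * normSq τ := mul_pos hN (normSq_pos.2 (ne_zero_of_im_pos hτ))
  have hne : (N * normSq τ) ^ a ≠ 0 := (Real.rpow_pos_of_pos hpos a).ne'
  rw [hF, fricke_im, Real.div_rpow hτ.le hpos.le]
  field_simp

lemma eq_zero_of_fricke_of_forall_lt_im {N y a : ℝ} {F : ℂ → ℂ} (hN : 0 < N)
    (hNy : N * (y ^ 2 + 1 / 4) < 1) (hlarge : ∀ τ : ℂ, y < τ.im → F τ = 0)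
    (hadd : ∀ τ : ℂ, 0 < τ.im → ∀ n : ℤ, F (τ + n) = F τ)
    (hF : ∀ τ : ℂ, 0 < τ.im → ‖F (fricke N τ)‖ = (N * normSq τ) ^ a * ‖F τ‖)
    {τ : ℂ} (hτ : 0 < τ.im) : F τ = 0 := by
  refine fricke_induction hN hNy (P := fun σ ↦ F σ = 0) hlarge
    (fun σ hσ n h ↦ hadd σ hσ n ▸ h) (fun σ hσ h ↦ ?_) hτ
  have hpos := Real.rpow_pos_of_pos (mul_pos hN (normSq_pos.2 (ne_zero_of_im_pos hσ))) a
  simpa [h, hpos.ne'] using hF σ hσ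

-- `‖F τ‖ (im τ)^(k/2)` is invariant under translations and the Fricke involution. If `F` is
-- nonzero, take `t` of height `y` where `‖G (qq t)‖` is largest among heights at least `y`; moving
-- `t` up by the group contradicts the strict decay of `x^(k/2) e^(-2πmx)` for `x ≥ y`.
theorem eq_zero_of_fricke_of_vanishing_order {N y : ℝ} {m k : ℕ} {F G : ℂ → ℂ} (hN : 0 < N)
    (hy : 0 < y) (hNy : N * (y ^ 2 + 1 / 4) < 1) (hk : k < 4 * Real.pi * m * y)
    (hG : DifferentiableOn ℂ G (Metric.ball 0 1))
    (hFG : ∀ τ : ℂ, 0 < τ.im → F τ = qq τ ^ m * G (qq τ))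
    (hF : ∀ τ : ℂ, 0 < τ.im → ‖F (fricke N τ)‖ = (N * normSq τ) ^ (k / 2 : ℝ) * ‖F τ‖)
    {τ : ℂ} (hτ : 0 < τ.im) : F τ = 0 := by
  have hFadd (σ : ℂ) (hσ : 0 < σ.im) (n : ℤ) : F (σ + n) = F σ := by
    rw [hFG σ hσ, hFG _ (by simpa using hσ), qq_add_intCast]
  obtain ⟨w, hw, hmax⟩ := exists_norm_eq_forall_norm_le hG (Real.exp_pos (-(2 * Real.pi * y)))
    (Real.exp_lt_one_iff.2 (neg_neg_of_pos (by positivity)))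
  have hbound (σ : ℂ) (hσ : y < σ.im) : ‖G (qq σ)‖ ≤ ‖G w‖ := by
    refine hmax _ ?_
    rw [norm_qq]
    gcongr
  obtain hw0 | hw0 := (norm_nonneg (G w)).eq_or_lt
  · refine eq_zero_of_fricke_of_forall_lt_im hN hNy (fun σ hσ ↦ ?_) hFadd hF hτ
    rw [hFG σ (hy.trans hσ), norm_le_zero_iff.1 ((hbound σ hσ).trans_eq hw0.symm), mul_zero]
  obtain ⟨t, rfl⟩ := exists_qq_eq (norm_ne_zero_iff.1 (hw ▸ (Real.exp_pos _).ne'))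
  obtain rfl : t.im = y := by simpa [norm_qq, Real.pi_ne_zero] using hw
  have hnorm (σ : ℂ) (hσ : 0 < σ.im) : ‖F σ‖ * σ.im ^ (k / 2 : ℝ) =
      ‖G (qq σ)‖ * (σ.im ^ (k / 2 : ℝ) * Real.exp (-(2 * Real.pi * m * σ.im))) := by
    rw [hFG σ hσ, norm_mul, norm_pow, norm_qq, ← Real.exp_nat_mul]
    ring_nf
  have hlt : ‖F t‖ * t.im ^ (k / 2 : ℝ) < ‖F t‖ * t.im ^ (k / 2 : ℝ) := by
    refine fricke_induction hN hNy
      (P := fun σ ↦ ‖F σ‖ * σ.im ^ (k / 2 : ℝ) < ‖F t‖ * t.im ^ (k / 2 : ℝ)) (fun σ hσ ↦ ?_)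
      (fun σ hσ n h ↦ ?_) (fun σ hσ h ↦ norm_mul_im_rpow_fricke hN hσ (hF σ hσ) ▸ h) hy
    · have hσ0 := hy.trans hσ
      rw [hnorm σ hσ0, hnorm t hy]
      refine (mul_le_mul_of_nonneg_right (hbound σ hσ) (by positivity)).trans_lt ?_
      have hk' : (k / 2 : ℝ) < 2 * Real.pi * m * t.im := by linarith
      exact mul_lt_mul_of_pos_left (rpow_mul_exp_neg_lt (by positivity) hy hk' hσ) hw0
    · simpa [hFadd σ hσ n] using h
  exact absurd hlt (lt_irrefl _)

end Vanishing

section NormalizedDerivative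

lemma hasDerivAt_of_differentiableOn {F : ℂ → ℂ} (hF : DifferentiableOn ℂ F ℍₒ) {τ : ℂ}
    (hτ : 0 < τ.im) : HasDerivAt F (2 * Real.pi * I * nderiv F τ) τ := by
  rw [nderiv, mul_inv_cancel_left₀ two_pi_I_ne_zero]
  exact (hF.differentiableAt (isOpen_upperHalfPlaneSet.mem_nhds hτ)).hasDerivAt

lemma nderiv_eq_of_hasDerivAt {F : ℂ → ℂ} {a τ : ℂ} (hF : HasDerivAt F (2 * Real.pi * I * a) τ) :
    nderiv F τ = a := by
  rw [nderiv, hF.deriv, inv_mul_cancel_left₀ two_pi_I_ne_zero]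

lemma differentiableOn_nderiv {F : ℂ → ℂ} (hF : DifferentiableOn ℂ F ℍₒ) :
    DifferentiableOn ℂ (nderiv F) ℍₒ :=
  (hF.deriv isOpen_upperHalfPlaneSet).const_mul _

lemma eq_zero_of_forall_sq_mul_eq_zero {F R : ℂ → ℂ} (hF : DifferentiableOn ℂ F ℍₒ)
    (hR : DifferentiableOn ℂ R ℍₒ) (hF0 : ∃ τ ∈ ℍₒ, F τ ≠ 0)
    (hFR : ∀ τ ∈ ℍₒ, F τ ^ 2 * R τ = 0) : ∀ τ ∈ ℍₒ, R τ = 0 := by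
  obtain ⟨τ₀, hτ₀, hne⟩ := hF0
  have hpre : IsPreconnected ℍₒ := (convex_halfSpace_im_gt 0).isPreconnected
  refine ((AnalyticOnNhd.eq_zero_or_eq_zero_of_mul_eq_zero
    ((hF.pow 2).analyticOnNhd isOpen_upperHalfPlaneSet)
    (hR.analyticOnNhd isOpen_upperHalfPlaneSet) hFR hpre).resolve_left fun h ↦ ?_)
  exact hne (pow_eq_zero_iff two_ne_zero |>.1 (h τ₀ hτ₀))

/-- The first Rankin–Cohen bracket `[F, G]₁` of forms of weights `k` and `l`. -/
def rankinCohen (k l : ℕ) (F G : ℂ → ℂ) : ℂ → ℂ :=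
  fun τ ↦ k * F τ * nderiv G τ - l * nderiv F τ * G τ

/-- The second Rankin–Cohen bracket of a form `F` of weight `k` with itself, divided by `k + 1`. -/
def selfRankinCohen (k : ℕ) (F : ℂ → ℂ) : ℂ → ℂ :=
  fun τ ↦ k * F τ * nderiv (nderiv F) τ - (k + 1) * nderiv F τ ^ 2

lemma nderiv_selfRankinCohen (k : ℕ) {F : ℂ → ℂ} (hF : DifferentiableOn ℂ F ℍₒ) {τ : ℂ}
    (hτ : 0 < τ.im) : nderiv (selfRankinCohen k F) τ =
      k * F τ * nderiv (nderiv (nderiv F)) τ - (k + 2) * nderiv F τ * nderiv (nderiv F) τ := by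
  have hF' := differentiableOn_nderiv hF
  have h0 := hasDerivAt_of_differentiableOn hF hτ
  have h1 := hasDerivAt_of_differentiableOn hF' hτ
  have h2 := hasDerivAt_of_differentiableOn (differentiableOn_nderiv hF') hτ
  refine nderiv_eq_of_hasDerivAt ((((h0.const_mul (k : ℂ)).mul h2).sub
    ((h1.pow 2).const_mul (k + 1 : ℂ))).congr_deriv ?_)
  push_cast
  ring

/-- The form `h² + 18 g³ - F⁶ g²` of weight `18`, where `F` has weight one and `g = F F'' - 2 F'²`
and `h = [F, g]₁` are the Rankin–Cohen brackets of weights `6` and `9`. -/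
def bracketSyzygy (F : ℂ → ℂ) : ℂ → ℂ := fun τ ↦
  rankinCohen 1 6 F (selfRankinCohen 1 F) τ ^ 2 + 18 * selfRankinCohen 1 F τ ^ 3 -
    F τ ^ 6 * selfRankinCohen 1 F τ ^ 2

lemma bracketSyzygy_eq_sq_mul {F : ℂ → ℂ} (hF : DifferentiableOn ℂ F ℍₒ) {τ : ℂ}
    (hτ : 0 < τ.im) : bracketSyzygy F τ =
      F τ ^ 2 * (F τ ^ 2 * (nderiv (nderiv (nderiv F)) τ) ^ 2 -
          6 * nderiv F τ * (3 * F τ * nderiv (nderiv F) τ - 4 * (nderiv F τ) ^ 2) *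
            nderiv (nderiv (nderiv F)) τ +
          18 * F τ * (nderiv (nderiv F) τ) ^ 3 -
          (F τ ^ 6 + 27 * (nderiv F τ) ^ 2) * (nderiv (nderiv F) τ) ^ 2 +
          4 * F τ ^ 5 * (nderiv F τ) ^ 2 * nderiv (nderiv F) τ -
          4 * F τ ^ 4 * (nderiv F τ) ^ 4) := by
  rw [bracketSyzygy, rankinCohen, nderiv_selfRankinCohen 1 hF hτ, selfRankinCohen]
  push_cast
  ring

end NormalizedDerivative

section FrickeCovariance

lemma hasDerivAt_fricke {N : ℝ} (hN : N ≠ 0) {τ : ℂ} (hτ : τ ≠ 0) :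
    HasDerivAt (fricke N) (1 / (N * τ ^ 2)) τ := by
  have hN' : (N : ℂ) ≠ 0 := mod_cast hN
  refine (((hasDerivAt_id τ).const_mul (N : ℂ)).inv (mul_ne_zero hN' hτ) |>.const_mul
    (-1 : ℂ)).congr_deriv ?_
  simp only [id]
  field_simp

lemma nderiv_fricke_eq_of_hasDerivAt {N : ℝ} (hN : 0 < N) {F R : ℂ → ℂ} {r τ : ℂ}
    (hF : DifferentiableOn ℂ F ℍₒ) (hR : ∀ σ : ℂ, 0 < σ.im → F (fricke N σ) = R σ) (hτ : 0 < τ.im)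
    (hr : HasDerivAt R (2 * Real.pi * I * r) τ) : nderiv F (fricke N τ) = N * τ ^ 2 * r := by
  have hτ0 := ne_zero_of_im_pos hτ
  have hN' : (N : ℂ) ≠ 0 := mod_cast hN.ne'
  have hcomp := (hasDerivAt_of_differentiableOn hF (fricke_im_pos hN hτ)).comp τ
    (hasDerivAt_fricke hN.ne' hτ0)
  have hRF : R =ᶠ[𝓝 τ] F ∘ fricke N := by
    filter_upwards [isOpen_upperHalfPlaneSet.mem_nhds hτ] with σ hσ using (hR σ hσ).symm
  have huniq := hcomp.unique (hr.congr_of_eventuallyEq hRF.symm)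
  rw [mul_assoc, mul_right_inj' two_pi_I_ne_zero] at huniq
  rw [← huniq]
  field_simp

/-- `F` is holomorphic on the upper half-plane and transforms with weight `k` and multiplier `ε`
under the Fricke involution of level `N`. -/
structure IsFrickeCovariant (N : ℝ) (k : ℕ) (ε : ℂ) (F : ℂ → ℂ) : Prop where
  differentiableOn : DifferentiableOn ℂ F ℍₒ
  map_fricke : ∀ τ : ℂ, 0 < τ.im → F (fricke N τ) = ε * τ ^ k * F τ

namespace IsFrickeCovariant

variable {N : ℝ} {k l : ℕ} {ε ε' τ : ℂ} {F G : ℂ → ℂ}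

lemma nderiv_fricke (hF : IsFrickeCovariant N k ε F) (hN : 0 < N) (hτ : 0 < τ.im) :
    nderiv F (fricke N τ) = N * ε *
      (τ ^ (k + 2) * nderiv F τ + (2 * Real.pi * I)⁻¹ * k * τ ^ (k + 1) * F τ) := by
  have := two_pi_I_ne_zero
  have hd := hasDerivAt_of_differentiableOn hF.differentiableOn hτ
  rw [nderiv_fricke_eq_of_hasDerivAt (r := ε * (τ ^ k * nderiv F τ +
    (2 * Real.pi * I)⁻¹ * (k * τ ^ (k - 1)) * F τ)) hN hF.differentiableOn hF.map_fricke hτ]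
  · cases k <;> simp <;> ring
  · refine (((hasDerivAt_pow k τ).const_mul ε).mul hd).congr_deriv ?_
    field_simp
    ring

lemma nderiv_nderiv_fricke (hF : IsFrickeCovariant N k ε F) (hN : 0 < N) (hτ : 0 < τ.im) :
    nderiv (nderiv F) (fricke N τ) = N ^ 2 * ε *
      (τ ^ (k + 4) * nderiv (nderiv F) τ +
        2 * (2 * Real.pi * I)⁻¹ * (k + 1) * τ ^ (k + 3) * nderiv F τ +
        (2 * Real.pi * I)⁻¹ ^ 2 * k * (k + 1) * τ ^ (k + 2) * F τ) := by
  have := two_pi_I_ne_zero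
  have hF' := differentiableOn_nderiv hF.differentiableOn
  have hd := hasDerivAt_of_differentiableOn hF.differentiableOn hτ
  have hd' := hasDerivAt_of_differentiableOn hF' hτ
  rw [nderiv_fricke_eq_of_hasDerivAt (r := N * ε * (τ ^ (k + 2) * nderiv (nderiv F) τ +
    2 * (2 * Real.pi * I)⁻¹ * (k + 1) * τ ^ (k + 1) * nderiv F τ +
    (2 * Real.pi * I)⁻¹ ^ 2 * k * (k + 1) * τ ^ k * F τ)) hN hF'
    (fun σ hσ ↦ hF.nderiv_fricke hN hσ) hτ]
  · ring
  · refine ((((hasDerivAt_pow (k + 2) τ).mul hd').add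
      (((hasDerivAt_pow (k + 1) τ).const_mul ((2 * Real.pi * I)⁻¹ * k)).mul hd)).const_mul
        (N * ε)).congr_deriv ?_
    simp only [Nat.add_sub_cancel, show k + 2 - 1 = k + 1 from rfl]
    push_cast
    field_simp
    ring

lemma rankinCohen (hF : IsFrickeCovariant N k ε F) (hG : IsFrickeCovariant N l ε' G)
    (hN : 0 < N) : IsFrickeCovariant N (k + l + 2) (N * ε * ε') (rankinCohen k l F G) where
  differentiableOn :=
    ((hF.differentiableOn.const_mul _).mul (differentiableOn_nderiv hG.differentiableOn)).sub
      (((differentiableOn_nderiv hF.differentiableOn).const_mul _).mul hG.differentiableOn)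
  map_fricke τ hτ := by
    simp only [_root_.rankinCohen, hF.map_fricke τ hτ, hG.map_fricke τ hτ,
      hF.nderiv_fricke hN hτ, hG.nderiv_fricke hN hτ]
    ring

lemma selfRankinCohen (hF : IsFrickeCovariant N k ε F) (hN : 0 < N) :
    IsFrickeCovariant N (2 * k + 4) (N ^ 2 * ε ^ 2) (selfRankinCohen k F) where
  differentiableOn :=
    have hF' := differentiableOn_nderiv hF.differentiableOn
    ((hF.differentiableOn.const_mul _).mul (differentiableOn_nderiv hF')).sub
      ((hF'.pow 2).const_mul _)
  map_fricke τ hτ := by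
    simp only [_root_.selfRankinCohen, hF.map_fricke τ hτ, hF.nderiv_fricke hN hτ,
      hF.nderiv_nderiv_fricke hN hτ]
    ring

lemma bracketSyzygy (hF : IsFrickeCovariant N 1 ε F) (hN : 0 < N) (hε : ε ^ 4 = N ^ 2) :
    IsFrickeCovariant N 18 (N ^ 6 * ε ^ 6) (bracketSyzygy F) := by
  have hg : IsFrickeCovariant N 6 _ _ := hF.selfRankinCohen hN
  have hh : IsFrickeCovariant N 9 _ _ := hF.rankinCohen hg hN
  refine ⟨((hh.differentiableOn.pow 2).add ((hg.differentiableOn.pow 3).const_mul 18)).sub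
    ((hF.differentiableOn.pow 6).mul (hg.differentiableOn.pow 2)), fun τ hτ ↦ ?_⟩
  simp only [_root_.bracketSyzygy, hF.map_fricke τ hτ, hg.map_fricke τ hτ, hh.map_fricke τ hτ]
  linear_combination
    -N ^ 4 * ε ^ 6 * τ ^ 18 * F τ ^ 6 * _root_.selfRankinCohen 1 F τ ^ 2 * hε

lemma norm_map_fricke (hF : IsFrickeCovariant N k ε F) (hN : 0 ≤ N) (hε : ‖ε‖ = N ^ (k / 2 : ℝ))
    (hτ : 0 < τ.im) : ‖F (fricke N τ)‖ = (N * normSq τ) ^ (k / 2 : ℝ) * ‖F τ‖ := by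
  rw [hF.map_fricke τ hτ, norm_mul, norm_mul, norm_pow, hε, Real.mul_rpow hN (normSq_nonneg τ),
    normSq_eq_norm_sq, ← Real.rpow_natCast_mul (norm_nonneg τ), Nat.cast_ofNat,
    mul_div_cancel₀ _ two_ne_zero, Real.rpow_natCast]

end IsFrickeCovariant

end FrickeCovariance

section QJets

lemma hasDerivAt_qq (τ : ℂ) : HasDerivAt qq (2 * Real.pi * I * qq τ) τ := by
  refine ((hasDerivAt_id τ).const_mul (2 * Real.pi * I : ℂ)).cexp.congr_deriv ?_
  rw [mul_one, mul_comm]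
  rfl

/-- `F = P(q) + O(q^m)` at the cusp `i∞`: on the upper half-plane `F = P(q) + q^m B(q)` with `B`
holomorphic on the open unit disc. -/
def HasQJet (m : ℕ) (F : ℂ → ℂ) (P : ℂ[X]) : Prop :=
  ∃ B : ℂ → ℂ, DifferentiableOn ℂ B (Metric.ball 0 1) ∧
    ∀ τ : ℂ, 0 < τ.im → F τ = P.eval (qq τ) + qq τ ^ m * B (qq τ)

namespace HasQJet

variable {m : ℕ} {F G : ℂ → ℂ} {P Q : ℂ[X]}

lemma const (m : ℕ) (c : ℂ) : HasQJet m (fun _ ↦ c) (C c) :=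
  ⟨0, differentiableOn_const 0, by simp⟩

lemma sub (hF : HasQJet m F P) (hG : HasQJet m G Q) :
    HasQJet m (fun τ ↦ F τ - G τ) (P - Q) := by
  obtain ⟨A, hA, hFA⟩ := hF
  obtain ⟨B, hB, hGB⟩ := hG
  refine ⟨fun w ↦ A w - B w, hA.sub hB, fun τ hτ ↦ ?_⟩
  simp only [hFA τ hτ, hGB τ hτ, eval_sub]
  ring

lemma add (hF : HasQJet m F P) (hG : HasQJet m G Q) :
    HasQJet m (fun τ ↦ F τ + G τ) (P + Q) := by
  obtain ⟨A, hA, hFA⟩ := hF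
  obtain ⟨B, hB, hGB⟩ := hG
  refine ⟨fun w ↦ A w + B w, hA.add hB, fun τ hτ ↦ ?_⟩
  simp only [hFA τ hτ, hGB τ hτ, eval_add]
  ring

lemma mul (hF : HasQJet m F P) (hG : HasQJet m G Q) :
    HasQJet m (fun τ ↦ F τ * G τ) (P * Q) := by
  obtain ⟨A, hA, hFA⟩ := hF
  obtain ⟨B, hB, hGB⟩ := hG
  refine ⟨fun w ↦ P.eval w * B w + A w * Q.eval w + w ^ m * A w * B w, ?_, fun τ hτ ↦ ?_⟩
  · have hP := P.differentiable.differentiableOn (s := Metric.ball 0 1)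
    have hQ := Q.differentiable.differentiableOn (s := Metric.ball 0 1)
    fun_prop
  · simp only [hFA τ hτ, hGB τ hτ, eval_mul]
    ring

lemma pow (hF : HasQJet m F P) (n : ℕ) : HasQJet m (fun τ ↦ F τ ^ n) (P ^ n) := by
  induction n with
  | zero => simpa using const m 1
  | succ n ih => simpa only [pow_succ] using ih.mul hF

lemma congr (hF : HasQJet m F P) (hPQ : X ^ m ∣ P - Q) : HasQJet m F Q := by
  obtain ⟨A, hA, hFA⟩ := hF
  obtain ⟨R, hR⟩ := hPQ
  refine ⟨fun w ↦ A w + R.eval w, hA.add R.differentiable.differentiableOn, fun τ hτ ↦ ?_⟩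
  rw [hFA τ hτ, eq_add_of_sub_eq hR]
  simp only [eval_add, eval_mul, eval_pow, eval_X]
  ring

lemma nderiv (hF : HasQJet m F P) : HasQJet m (nderiv F) (X * derivative P) := by
  obtain ⟨A, hA, hFA⟩ := hF
  have hA' := hA.deriv Metric.isOpen_ball
  refine ⟨fun w ↦ m * A w + w * deriv A w, by fun_prop, fun τ hτ ↦ ?_⟩
  have hq := hasDerivAt_qq τ
  have hmem : Metric.ball 0 1 ∈ 𝓝 (qq τ) :=
    Metric.isOpen_ball.mem_nhds (by simpa using norm_qq_lt_one_iff.2 hτ)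
  have hFτ : F =ᶠ[𝓝 τ] fun σ ↦ P.eval (qq σ) + qq σ ^ m * A (qq σ) := by
    filter_upwards [isOpen_upperHalfPlaneSet.mem_nhds hτ] with σ hσ using hFA σ hσ
  refine nderiv_eq_of_hasDerivAt ((((P.hasDerivAt _).comp τ hq).add ((hq.pow m).mul
    ((hA.differentiableAt hmem).hasDerivAt.comp τ hq))).congr_of_eventuallyEq hFτ
      |>.congr_deriv ?_)
  simp only [eval_mul, eval_X, Pi.pow_apply, Function.comp_apply]
  cases m <;> simp <;> ring

lemma selfRankinCohen (hF : HasQJet m F P) (k : ℕ) :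
    HasQJet m (selfRankinCohen k F) ((k : ℂ[X]) * P * (X * derivative (X * derivative P)) -
      (k + 1 : ℂ[X]) * (X * derivative P) ^ 2) := by
  have h := (((const m (k : ℂ)).mul hF).mul hF.nderiv.nderiv).sub
    ((const m (k + 1 : ℂ)).mul (hF.nderiv.pow 2))
  simp only [map_natCast, map_add, map_one] at h
  exact h

lemma rankinCohen (hF : HasQJet m F P) (hG : HasQJet m G Q) (k l : ℕ) :
    HasQJet m (rankinCohen k l F G)
      ((k : ℂ[X]) * P * (X * derivative Q) - (l : ℂ[X]) * (X * derivative P) * Q) := by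
  have h := (((const m (k : ℂ)).mul hF).mul hG.nderiv).sub
    (((const m (l : ℂ)).mul hF.nderiv).mul hG)
  simp only [map_natCast] at h
  exact h

lemma differentiableOn (hF : HasQJet m F P) : DifferentiableOn ℂ F ℍₒ := by
  obtain ⟨A, hA, hFA⟩ := hF
  have hq : DifferentiableOn ℂ qq ℍₒ := fun τ _ ↦
    (hasDerivAt_qq τ).differentiableAt.differentiableWithinAt
  have hAq : DifferentiableOn ℂ (A ∘ qq) ℍₒ :=
    hA.comp hq fun τ hτ ↦ by simpa using norm_qq_lt_one_iff.2 hτ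
  exact ((P.differentiable.comp_differentiableOn hq).add ((hq.pow m).mul hAq)).congr hFA

lemma tendsto (hF : HasQJet m F P) (hm : m ≠ 0) :
    Filter.Tendsto F (Filter.comap im Filter.atTop) (𝓝 (P.eval 0)) := by
  obtain ⟨A, hA, hFA⟩ := hF
  have hq : Filter.Tendsto qq (Filter.comap im Filter.atTop) (𝓝 0) :=
    qq_eq_qParam ▸ (qParam_tendsto one_pos).mono_right nhdsWithin_le_nhds
  have hA0 := (hA.differentiableAt (Metric.ball_mem_nhds 0 one_pos)).continuousAt
  have hlim := ((P.continuous.tendsto 0).comp hq).add ((hq.pow m).mul (hA0.tendsto.comp hq))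
  rw [zero_pow hm, zero_mul, add_zero] at hlim
  refine hlim.congr' ?_
  filter_upwards [Filter.preimage_mem_comap (Filter.Ioi_mem_atTop 0)] with τ hτ
    using (hFA τ hτ).symm

end HasQJet

section QSeries

variable {ι : Type*} {n : ι → ℕ} {F : ℂ → ℂ}

lemma summable_pow_of_hasSum_qq_pow
    (hF : ∀ τ : ℂ, 0 < τ.im → HasSum (fun i ↦ qq τ ^ n i) (F τ)) {r : ℝ} (hr0 : 0 < r)
    (hr1 : r < 1) : Summable fun i ↦ r ^ n i := by
  have hnorm : ‖(r : ℂ)‖ = r := by simp [abs_of_pos hr0]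
  obtain ⟨τ, hτ⟩ := exists_qq_eq (w := r) (mod_cast hr0.ne')
  have := (hF τ (norm_qq_lt_one_iff.1 (by rwa [hτ, hnorm]))).summable.norm
  simpa only [norm_pow, hτ, hnorm] using this

lemma differentiableOn_tsum_pow (hn : ∀ r : ℝ, 0 < r → r < 1 → Summable fun i ↦ r ^ n i) :
    DifferentiableOn ℂ (fun w : ℂ ↦ ∑' i, w ^ n i) (Metric.ball 0 1) := by
  intro w hw
  obtain ⟨r, hwr, hr1⟩ := exists_between (mem_ball_zero_iff.1 hw)
  have hr := differentiableOn_tsum_of_summable_norm (F := fun i (w : ℂ) ↦ w ^ n i)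
    (hn r ((norm_nonneg w).trans_lt hwr) hr1) (fun i ↦ by fun_prop) Metric.isOpen_ball
    (fun i z hz ↦ by rw [norm_pow]; gcongr; exact (mem_ball_zero_iff.1 hz).le)
  exact (hr.differentiableAt (Metric.isOpen_ball.mem_nhds
    (mem_ball_zero_iff.2 hwr))).differentiableWithinAt

lemma hasQJet_of_hasSum_qq_pow {m : ℕ} {s : Finset ι} (hs : ∀ i ∉ s, m ≤ n i)
    (hF : ∀ τ : ℂ, 0 < τ.im → HasSum (fun i ↦ qq τ ^ n i) (F τ)) :
    HasQJet m F (∑ i ∈ s, X ^ n i) := by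
  have hsplit {R : Type} [Monoid R] (w : R) (i : {i // i ∉ s}) :
      w ^ n i = w ^ m * w ^ (n i - m) := by
    rw [← pow_add, Nat.add_sub_cancel' (hs i i.2)]
  refine ⟨fun w ↦ ∑' i : {i // i ∉ s}, w ^ (n i - m),
    differentiableOn_tsum_pow fun r hr0 hr1 ↦ ?_, fun τ hτ ↦ ?_⟩
  · refine (((summable_pow_of_hasSum_qq_pow hF hr0 hr1).subtype (· ∉ s)).mul_left
      (r ^ m)⁻¹).congr fun i ↦ ?_
    rw [Function.comp_apply, hsplit, inv_mul_cancel_left₀ (pow_pos hr0 m).ne']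
  · rw [← (hF τ hτ).tsum_eq, ← (hF τ hτ).summable.sum_add_tsum_subtype_compl s, ← tsum_mul_left]
    simp [eval_finsetSum, hsplit]

end QSeries

end QJets

section EisensteinSeries

/-- The norm `α² - αβ + β²` of the Eisenstein integer `α + βω`, the exponent in the series for
`E13`. -/
def eisensteinNorm (p : ℤ × ℤ) : ℕ := (p.1 ^ 2 - p.1 * p.2 + p.2 ^ 2).toNat

lemma coe_eisensteinNorm (p : ℤ × ℤ) :
    (eisensteinNorm p : ℤ) = p.1 ^ 2 - p.1 * p.2 + p.2 ^ 2 := by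
  refine Int.toNat_of_nonneg ?_
  nlinarith [sq_nonneg (p.1 - p.2), sq_nonneg p.1, sq_nonneg p.2]

lemma five_le_eisensteinNorm {p : ℤ × ℤ}
    (hp : p ∉ Finset.Icc (-2 : ℤ) 2 ×ˢ Finset.Icc (-2 : ℤ) 2) : 5 ≤ eisensteinNorm p := by
  contrapose! hp
  have hlt : p.1 ^ 2 - p.1 * p.2 + p.2 ^ 2 < 5 := coe_eisensteinNorm p ▸ mod_cast hp
  have h1 : p.1 ^ 2 < 3 ^ 2 := by nlinarith [sq_nonneg (p.1 - 2 * p.2)]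
  have h2 : p.2 ^ 2 < 3 ^ 2 := by nlinarith [sq_nonneg (p.2 - 2 * p.1)]
  rw [sq_lt_sq, abs_lt] at h1 h2
  simp only [Finset.mem_product, Finset.mem_Icc]
  norm_num at h1 h2
  omega

lemma map_eisensteinNorm_Icc :
    (Finset.Icc (-2 : ℤ) 2 ×ˢ Finset.Icc (-2 : ℤ) 2).val.map eisensteinNorm =
      {0} + .replicate 6 1 + .replicate 6 3 + .replicate 6 4 + .replicate 4 7 +
        .replicate 2 12 := by
  decide

lemma hasQJet_E13 : HasQJet 5 E13 (1 + 6 * X + 6 * X ^ 3 + 6 * X ^ 4) := by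
  refine (hasQJet_of_hasSum_qq_pow (n := eisensteinNorm) (fun _ ↦ five_le_eisensteinNorm)
    fun τ hτ ↦ ?_).congr ⟨4 * X ^ 2 + 2 * X ^ 7, ?_⟩
  · have h := (hasSum_E13_theta hτ).summable.hasSum
    simp only [← coe_eisensteinNorm, zpow_natCast] at h
    simpa only [E13, ← coe_eisensteinNorm, zpow_natCast] using h
  · change (Multiset.map ((X ^ ·) ∘ eisensteinNorm) _).sum - _ = _
    simp only [← Multiset.map_map, map_eisensteinNorm_Icc, Multiset.map_add, Multiset.map_singleton,
      Multiset.map_replicate, Multiset.sum_add, Multiset.sum_singleton, Multiset.sum_replicate,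
      nsmul_eq_mul]
    push_cast
    ring

lemma isFrickeCovariant_E13 : IsFrickeCovariant 3 1 (-I * Real.sqrt 3) E13 where
  differentiableOn := hasQJet_E13.differentiableOn
  map_fricke τ hτ := by rw [pow_one, E13_fricke hτ]

lemma quotient_mk_X_pow_self (R : Type*) [CommRing R] (m : ℕ) :
    Ideal.Quotient.mk (Ideal.span {(X : R[X]) ^ m}) X ^ m = 0 := by
  rw [← map_pow, Ideal.Quotient.eq_zero_iff_dvd]

lemma X_mul_derivative_jet_E13 : X * derivative (1 + 6 * X + 6 * X ^ 3 + 6 * X ^ 4 : ℂ[X]) =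
    6 * X + 18 * X ^ 3 + 24 * X ^ 4 := by
  simp only [derivative_add, derivative_mul, derivative_X, derivative_X_pow, derivative_one,
    derivative_ofNat, Nat.cast_ofNat, map_ofNat]
  ring

lemma hasQJet_selfRankinCohen_E13 :
    HasQJet 5 (selfRankinCohen 1 E13) (6 * X - 36 * X ^ 2 + 54 * X ^ 3 + 24 * X ^ 4) := by
  have hDD : X * derivative (6 * X + 18 * X ^ 3 + 24 * X ^ 4 : ℂ[X]) =
      6 * X + 54 * X ^ 3 + 96 * X ^ 4 := by
    simp only [derivative_add, derivative_mul, derivative_X, derivative_X_pow,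
      derivative_ofNat, Nat.cast_ofNat, map_ofNat]
    ring
  refine (hasQJet_E13.selfRankinCohen 1).congr ?_
  rw [X_mul_derivative_jet_E13, hDD, ← Ideal.Quotient.eq_zero_iff_dvd]
  have hX := quotient_mk_X_pow_self ℂ 5
  simp only [map_add, map_sub, map_mul, map_pow, map_ofNat, map_one, Nat.cast_one]
  grind

lemma hasQJet_rankinCohen_E13 :
    HasQJet 5 (rankinCohen 1 6 E13 (selfRankinCohen 1 E13))
      (6 * X - 252 * X ^ 2 + 1026 * X ^ 3 - 1488 * X ^ 4) := by
  have hD' : X * derivative (6 * X - 36 * X ^ 2 + 54 * X ^ 3 + 24 * X ^ 4 : ℂ[X]) =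
      6 * X - 72 * X ^ 2 + 162 * X ^ 3 + 96 * X ^ 4 := by
    simp only [derivative_add, derivative_sub, derivative_mul, derivative_X, derivative_X_pow,
      derivative_ofNat, Nat.cast_ofNat, map_ofNat]
    ring
  refine (hasQJet_E13.rankinCohen hasQJet_selfRankinCohen_E13 1 6).congr ?_
  rw [X_mul_derivative_jet_E13, hD', ← Ideal.Quotient.eq_zero_iff_dvd]
  have hX := quotient_mk_X_pow_self ℂ 5
  simp only [map_add, map_sub, map_mul, map_pow, map_ofNat, map_one, Nat.cast_one, Nat.cast_ofNat]
  grind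

lemma hasQJet_bracketSyzygy_E13 : HasQJet 5 (bracketSyzygy E13) 0 := by
  have hf := hasQJet_E13
  have hg := hasQJet_selfRankinCohen_E13
  have hh := hasQJet_rankinCohen_E13
  refine (((hh.pow 2).add ((HasQJet.const 5 18).mul (hg.pow 3))).sub
    ((hf.pow 6).mul (hg.pow 2))).congr ?_
  rw [← Ideal.Quotient.eq_zero_iff_dvd]
  have hX := quotient_mk_X_pow_self ℂ 5
  simp only [map_add, map_sub, map_mul, map_pow, map_ofNat, map_one, map_zero]
  grind

lemma norm_bracketSyzygy_E13_fricke {τ : ℂ} (hτ : 0 < τ.im) :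
    ‖bracketSyzygy E13 (fricke 3 τ)‖ =
      (3 * normSq τ) ^ ((18 : ℕ) / 2 : ℝ) * ‖bracketSyzygy E13 τ‖ := by
  have hsq : (-I * Real.sqrt 3) ^ 2 = -3 := by
    rw [mul_pow, ← ofReal_pow, Real.sq_sqrt zero_le_three, neg_sq, I_sq]
    norm_num
  have hfour : (-I * Real.sqrt 3) ^ 4 = (3 : ℝ) ^ 2 := by
    rw [pow_mul _ 2 2, hsq]
    norm_num
  refine (isFrickeCovariant_E13.bracketSyzygy three_pos hfour).norm_map_fricke zero_le_three ?_ hτ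
  rw [pow_mul (-I * Real.sqrt 3 : ℂ) 2 3, hsq]
  norm_num

lemma bracketSyzygy_E13_eq_zero {τ : ℂ} (hτ : 0 < τ.im) : bracketSyzygy E13 τ = 0 := by
  obtain ⟨G, hG, hFG⟩ := hasQJet_bracketSyzygy_E13
  refine eq_zero_of_fricke_of_vanishing_order (y := 0.287) (m := 5) (k := 18) three_pos
    (by norm_num) (by norm_num) ?_ hG (fun σ hσ ↦ by simpa using hFG σ hσ)
    (fun σ hσ ↦ norm_bracketSyzygy_E13_fricke hσ) hτ
  have := Real.pi_gt_d2
  norm_num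
  linarith

lemma exists_E13_ne_zero : ∃ τ ∈ ℍₒ, E13 τ ≠ 0 := by
  have hlim := hasQJet_E13.tendsto (by norm_num)
  have hone : eval 0 (1 + 6 * X + 6 * X ^ 3 + 6 * X ^ 4 : ℂ[X]) = 1 := by simp
  rw [hone] at hlim
  have hpos : ∀ᶠ τ : ℂ in Filter.comap im Filter.atTop, 0 < τ.im :=
    Filter.preimage_mem_comap (Filter.Ioi_mem_atTop 0)
  have := (Filter.atTop_neBot (α := ℝ)).comap_of_surj im_surjective
  exact (hpos.and (hlim.eventually_ne one_ne_zero)).exists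

end EisensteinSeries

/-- The Eisenstein series `E_{1,3}` satisfies a third-order nonlinear ODE. -/
theorem E13_third_order_ODE :
    ∀ τ : ℂ, 0 < τ.im →
      E13 τ ^ 2 * (nderiv (nderiv (nderiv E13)) τ) ^ 2 -
      6 * nderiv E13 τ * (3 * E13 τ * nderiv (nderiv E13) τ - 4 * (nderiv E13 τ) ^ 2) *
        nderiv (nderiv (nderiv E13)) τ +
      18 * E13 τ * (nderiv (nderiv E13) τ) ^ 3 -
      (E13 τ ^ 6 + 27 * (nderiv E13 τ) ^ 2) * (nderiv (nderiv E13) τ) ^ 2 +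
      4 * E13 τ ^ 5 * (nderiv E13 τ) ^ 2 * nderiv (nderiv E13) τ -
      4 * E13 τ ^ 4 * (nderiv E13 τ) ^ 4 = 0 := by
  have hf := hasQJet_E13.differentiableOn
  have hf₁ := differentiableOn_nderiv hf
  have hf₂ := differentiableOn_nderiv hf₁
  have hf₃ := differentiableOn_nderiv hf₂
  refine eq_zero_of_forall_sq_mul_eq_zero (F := E13) hf (by fun_prop) exists_E13_ne_zero
    fun τ hτ ↦ ?_
  rw [← bracketSyzygy_eq_sq_mul hf hτ, bracketSyzygy_E13_eq_zero hτ]
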